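/- For every 𝒜 ⊆ {N, C, P, D, 4}, the sequent calculus G_M𝒜ConW is sound and complete for the monotone modal logic M𝒜: for every formula A, A ∈ M𝒜 if and only if the sequent ⇒ A is derivable in G_M𝒜ConW. -/

import Mathlib

/-- Monomodal formulas. -/
inductive Fm : Type
  | var : ℕ → Fm
  | bot : Fm
  | top : Fm
  | neg : Fm → Fm
  | and : Fm → Fm → Fm
  | or : Fm → Fm → Fm
  | imp : Fm → Fm → Fm
  | box : Fm → Fm

/-- Evaluation of the propositional structure of a formula under an assignment
`v` of truth values to formulas (only used on atoms, i.e. propositional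
variables and boxed formulas). -/
def evalP (v : Fm → Prop) : Fm → Prop
  | .var n => v (.var n)
  | .bot => False
  | .top => True
  | .neg A => ¬ evalP v A
  | .and A B => evalP v A ∧ evalP v B
  | .or A B => evalP v A ∨ evalP v B
  | .imp A B => evalP v A → evalP v B
  | .box A => v (.box A)

/-- `A` is an instance of a classical propositional tautology. -/
def Taut (A : Fm) : Prop := ∀ v, evalP v A

/-- A component of a (linear nested) sequent: a two-sided multiset sequent. -/
abbrev Cmp := Multiset Fm × Multiset Fm

/-- A set of additional axioms for monotone modal logic `M`, among
`C, N, P, D, T, 4, 5`. -/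
structure MAx where
  c : Bool := false
  n : Bool := false
  p : Bool := false
  d : Bool := false
  t : Bool := false
  four : Bool := false
  five : Bool := false

/-- Hilbert-style theoremhood in the extension `M𝒜` of monotone modal logic
`M` (classical propositional logic, the congruence rule and the axiom `M`)
with the axioms in `𝒜`. -/
inductive MThm (Ax : MAx) : Fm → Prop
  | taut {A} : Taut A → MThm Ax A
  | mp {A B} : MThm Ax (.imp A B) → MThm Ax A → MThm Ax B
  | cong {A B} : MThm Ax (.imp A B) → MThm Ax (.imp B A) →
      MThm Ax (.imp (.box A) (.box B))
  | axM {A B} : MThm Ax (.imp (.box (.and A B)) (.and (.box A) (.box B)))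
  | axC {A B} : Ax.c = true →
      MThm Ax (.imp (.and (.box A) (.box B)) (.box (.and A B)))
  | axN : Ax.n = true → MThm Ax (.box .top)
  | axP : Ax.p = true → MThm Ax (.neg (.box .bot))
  | axD {A} : Ax.d = true → MThm Ax (.neg (.and (.box A) (.box (.neg A))))
  | axT {A} : Ax.t = true → MThm Ax (.imp (.box A) A)
  | ax4 {A} : Ax.four = true → MThm Ax (.imp (.box A) (.box (.box A)))
  | ax5 {A} : Ax.five = true → MThm Ax (.or (.box A) (.box (.neg (.box A))))

/-- The sequent calculus `G_M𝒜ConW` for extensions of monotone modal logic,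
optionally (for `cut = true`) extended with the multicut rule: the classical
propositional sequent calculus with explicit weakening and contraction, the
rule `M` (if `C ∉ 𝒜`) or `C` (if `C ∈ 𝒜`), a rule for each further axiom in
`𝒜` (the rule `N` also being present whenever `5 ∈ 𝒜`, since `N` is derivable
in `M5`), and the required combination rules `D4`, `D5`, `CD`, `C4`, `CD4`,
`K4`, `K45`, `KD45`, each included exactly when the corresponding combination
of axioms is present. -/
inductive GM (Ax : MAx) (cut : Bool) : Multiset Fm → Multiset Fm → Prop
  | init {Γ Δ : Multiset Fm} {m : ℕ} : GM Ax cut (Fm.var m ::ₘ Γ) (Fm.var m ::ₘ Δ)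
  | botL {Γ Δ} : GM Ax cut (Fm.bot ::ₘ Γ) Δ
  | topR {Γ Δ} : GM Ax cut Γ (Fm.top ::ₘ Δ)
  | negL {Γ Δ A} : GM Ax cut Γ (A ::ₘ Δ) → GM Ax cut (Fm.neg A ::ₘ Γ) Δ
  | negR {Γ Δ A} : GM Ax cut (A ::ₘ Γ) Δ → GM Ax cut Γ (Fm.neg A ::ₘ Δ)
  | andL {Γ Δ A B} : GM Ax cut (A ::ₘ B ::ₘ Γ) Δ → GM Ax cut (Fm.and A B ::ₘ Γ) Δ
  | andR {Γ Δ A B} : GM Ax cut Γ (A ::ₘ Δ) → GM Ax cut Γ (B ::ₘ Δ) →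
      GM Ax cut Γ (Fm.and A B ::ₘ Δ)
  | orL {Γ Δ A B} : GM Ax cut (A ::ₘ Γ) Δ → GM Ax cut (B ::ₘ Γ) Δ →
      GM Ax cut (Fm.or A B ::ₘ Γ) Δ
  | orR {Γ Δ A B} : GM Ax cut Γ (A ::ₘ B ::ₘ Δ) → GM Ax cut Γ (Fm.or A B ::ₘ Δ)
  | impL {Γ Δ A B} : GM Ax cut (B ::ₘ Γ) Δ → GM Ax cut Γ (A ::ₘ Δ) →
      GM Ax cut (Fm.imp A B ::ₘ Γ) Δ
  | impR {Γ Δ A B} : GM Ax cut (A ::ₘ Γ) (B ::ₘ Δ) → GM Ax cut Γ (Fm.imp A B ::ₘ Δ)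
  | wkL {Γ Δ A} : GM Ax cut Γ Δ → GM Ax cut (A ::ₘ Γ) Δ
  | wkR {Γ Δ A} : GM Ax cut Γ Δ → GM Ax cut Γ (A ::ₘ Δ)
  | conL {Γ Δ A} : GM Ax cut (A ::ₘ A ::ₘ Γ) Δ → GM Ax cut (A ::ₘ Γ) Δ
  | conR {Γ Δ A} : GM Ax cut Γ (A ::ₘ A ::ₘ Δ) → GM Ax cut Γ (A ::ₘ Δ)
  | ruleM {A B} : Ax.c = false →
      GM Ax cut {A} {B} → GM Ax cut {Fm.box A} {Fm.box B}
  | ruleC {Γ : Multiset Fm} {A} : Ax.c = true → Γ ≠ 0 →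
      GM Ax cut Γ {A} → GM Ax cut (Γ.map Fm.box) {Fm.box A}
  | ruleN {A} : (Ax.n = true ∨ Ax.five = true) →
      GM Ax cut 0 {A} → GM Ax cut 0 {Fm.box A}
  | ruleP {A} : Ax.p = true →
      GM Ax cut {A} 0 → GM Ax cut {Fm.box A} 0
  | ruleD {A B} : Ax.d = true →
      GM Ax cut {A, B} 0 → GM Ax cut {Fm.box A, Fm.box B} 0
  | ruleT {Γ Δ A} : Ax.t = true →
      GM Ax cut (A ::ₘ Γ) Δ → GM Ax cut (Fm.box A ::ₘ Γ) Δ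
  | rule4 {A B} : Ax.four = true →
      GM Ax cut {Fm.box A} {B} → GM Ax cut {Fm.box A} {Fm.box B}
  | rule5 {A B} : Ax.five = true →
      GM Ax cut 0 {A, Fm.box B} → GM Ax cut 0 {Fm.box A, Fm.box B}
  | ruleD4 {A B} : Ax.c = false → Ax.four = true →
      (Ax.d = true ∨ (Ax.p = true ∧ Ax.five = true)) →
      GM Ax cut {A, Fm.box B} 0 → GM Ax cut {Fm.box A, Fm.box B} 0
  | ruleD5 {A B} : Ax.c = false → Ax.five = true →
      (Ax.d = true ∨ (Ax.p = true ∧ Ax.four = true)) →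
      GM Ax cut {A} {Fm.box B} → GM Ax cut {Fm.box A} {Fm.box B}
  | ruleCD {Γ : Multiset Fm} : Ax.c = true → (Ax.p = true ∨ Ax.d = true) →
      GM Ax cut Γ 0 → GM Ax cut (Γ.map Fm.box) 0
  | ruleC4 {Γ Sg : Multiset Fm} {B} : Ax.c = true → Ax.four = true →
      Γ + Sg ≠ 0 →
      GM Ax cut (Γ.map Fm.box + Sg) {B} →
      GM Ax cut (Γ.map Fm.box + Sg.map Fm.box) {Fm.box B}
  | ruleCD4 {Γ Sg : Multiset Fm} : Ax.c = true → Ax.four = true →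
      (Ax.p = true ∨ Ax.d = true) →
      GM Ax cut (Γ.map Fm.box + Sg) 0 →
      GM Ax cut (Γ.map Fm.box + Sg.map Fm.box) 0
  | ruleK4 {Γ Sg : Multiset Fm} {A} : Ax.c = true → Ax.n = true → Ax.four = true →
      GM Ax cut (Γ.map Fm.box + Sg) {A} →
      GM Ax cut (Γ.map Fm.box + Sg.map Fm.box) {Fm.box A}
  | ruleK45 {Γ Sg Δ : Multiset Fm} {A} : Ax.c = true → Ax.n = true →
      Ax.four = true → Ax.five = true →
      GM Ax cut (Γ.map Fm.box + Sg) (A ::ₘ Δ.map Fm.box) →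
      GM Ax cut (Γ.map Fm.box + Sg.map Fm.box) (Fm.box A ::ₘ Δ.map Fm.box)
  | ruleKD45 {Γ Sg Δ : Multiset Fm} : Ax.c = true → Ax.n = true →
      Ax.four = true → Ax.five = true → (Ax.p = true ∨ Ax.d = true) →
      GM Ax cut (Γ.map Fm.box + Sg) (Δ.map Fm.box) →
      GM Ax cut (Γ.map Fm.box + Sg.map Fm.box) (Δ.map Fm.box)
  | mcut {Γ Δ Sg Pp : Multiset Fm} {A} {nn mm : ℕ} : cut = true →
      1 ≤ nn → 1 ≤ mm →
      GM Ax cut Γ (Δ + Multiset.replicate nn A) →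
      GM Ax cut (Sg + Multiset.replicate mm A) Pp →
      GM Ax cut (Γ + Sg) (Δ + Pp)

theorem GM_wkL_add {Ax : MAx} {F Γ Δ : Multiset Fm} (h : GM Ax false Γ Δ) :
    GM Ax false (F + Γ) Δ := by
  induction F using Multiset.induction_on with
  | empty => simpa using h
  | cons a F ih => rw [Multiset.cons_add]; exact GM.wkL ih

theorem GM_wkR_add {Ax : MAx} {F Γ Δ : Multiset Fm} (h : GM Ax false Γ Δ) :
    GM Ax false Γ (F + Δ) := by
  induction F using Multiset.induction_on with
  | empty => simpa using h
  | cons a F ih => rw [Multiset.cons_add]; exact GM.wkR ih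

theorem GM_conL_add {Ax : MAx} {F Γ Δ : Multiset Fm} (hs : ∀ x ∈ Γ, x ∈ F)
    (h : GM Ax false (F + Γ) Δ) : GM Ax false F Δ := by
  induction Γ using Multiset.induction_on with
  | empty => simpa using h
  | cons a Γ ih =>
    apply ih (fun x hx => hs x (Multiset.mem_cons_of_mem hx))
    obtain ⟨F', rfl⟩ := Multiset.exists_cons_of_mem (hs a (Multiset.mem_cons_self a Γ))
    rw [Multiset.cons_add]
    apply GM.conL
    rwa [Multiset.add_cons, Multiset.cons_add] at h

theorem GM_conR_add {Ax : MAx} {F Γ Δ : Multiset Fm} (hs : ∀ x ∈ Δ, x ∈ F)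
    (h : GM Ax false Γ (F + Δ)) : GM Ax false Γ F := by
  induction Δ using Multiset.induction_on with
  | empty => simpa using h
  | cons a Δ ih =>
    apply ih (fun x hx => hs x (Multiset.mem_cons_of_mem hx))
    obtain ⟨F', rfl⟩ := Multiset.exists_cons_of_mem (hs a (Multiset.mem_cons_self a Δ))
    rw [Multiset.cons_add]
    apply GM.conR
    rwa [Multiset.add_cons, Multiset.cons_add] at h

theorem GM_struct {Ax : MAx} {Γ Δ Γ' Δ' : Multiset Fm} (h : GM Ax false Γ Δ)
    (h1 : ∀ x ∈ Γ, x ∈ Γ') (h2 : ∀ x ∈ Δ, x ∈ Δ') : GM Ax false Γ' Δ' :=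
  GM_conL_add h1 (GM_conR_add h2 (GM_wkR_add (GM_wkL_add h)))

/-- Set-based derivability. -/
def DerS (Ax : MAx) (S T : Set Fm) : Prop :=
  ∃ Γ Δ : Multiset Fm, (∀ x ∈ Γ, x ∈ S) ∧ (∀ x ∈ Δ, x ∈ T) ∧ GM Ax false Γ Δ

theorem DerS_insL {Ax : MAx} {S T : Set Fm} {A : Fm} (h : DerS Ax (insert A S) T) :
    ∃ Γ Δ : Multiset Fm, (∀ x ∈ Γ, x ∈ S) ∧ (∀ x ∈ Δ, x ∈ T) ∧
      GM Ax false (A ::ₘ Γ) Δ := by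
  classical
  obtain ⟨Γ, Δ, h1, h2, h3⟩ := h
  refine ⟨Γ.filter (fun x => x ∈ S), Δ, by simp, h2, GM_struct h3 ?_ (fun _ h => h)⟩
  intro x hx
  rcases h1 x hx with h | h
  · simp [h]
  · simp [hx, h]

theorem DerS_insR {Ax : MAx} {S T : Set Fm} {A : Fm} (h : DerS Ax S (insert A T)) :
    ∃ Γ Δ : Multiset Fm, (∀ x ∈ Γ, x ∈ S) ∧ (∀ x ∈ Δ, x ∈ T) ∧
      GM Ax false Γ (A ::ₘ Δ) := by
  classical
  obtain ⟨Γ, Δ, h1, h2, h3⟩ := h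
  refine ⟨Γ, Δ.filter (fun x => x ∈ T), h1, by simp, GM_struct h3 (fun _ h => h) ?_⟩
  intro x hx
  rcases h2 x hx with h | h
  · simp [h]
  · simp [hx, h]

/-- Worlds: maximal underivable pairs. -/
structure World (Ax : MAx) where
  S : Set Fm
  T : Set Fm
  cons : ¬ DerS Ax S T
  maxL : ∀ A, A ∉ S → DerS Ax (insert A S) T
  maxR : ∀ A, A ∉ T → DerS Ax S (insert A T)

theorem chain_fin {c : Set (Set Fm × Set Fm)} (hc : IsChain (· ≤ ·) c)
    {y : Set Fm × Set Fm} (hy : y ∈ c) (Γ Δ : Multiset Fm)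
    (h1 : ∀ x ∈ Γ, ∃ p ∈ c, x ∈ p.1) (h2 : ∀ x ∈ Δ, ∃ p ∈ c, x ∈ p.2) :
    ∃ p ∈ c, (∀ x ∈ Γ, x ∈ p.1) ∧ (∀ x ∈ Δ, x ∈ p.2) := by
  induction Γ using Multiset.induction_on with
  | empty =>
    induction Δ using Multiset.induction_on with
    | empty => exact ⟨y, hy, by simp, by simp⟩
    | cons a Δ ih =>
      obtain ⟨p, hp, _, hp2⟩ := ih (fun x hx => h2 x (Multiset.mem_cons_of_mem hx))
      obtain ⟨q, hq, haq⟩ := h2 a (Multiset.mem_cons_self a Δ)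
      rcases hc.total hp hq with hle | hle
      · refine ⟨q, hq, by simp, ?_⟩
        intro x hx
        rcases Multiset.mem_cons.1 hx with rfl | hx
        · exact haq
        · exact hle.2 (hp2 x hx)
      · refine ⟨p, hp, by simp, ?_⟩
        intro x hx
        rcases Multiset.mem_cons.1 hx with rfl | hx
        · exact hle.2 haq
        · exact hp2 x hx
  | cons a Γ ih =>
    obtain ⟨p, hp, hp1, hp2⟩ := ih (fun x hx => h1 x (Multiset.mem_cons_of_mem hx))
    obtain ⟨q, hq, haq⟩ := h1 a (Multiset.mem_cons_self a Γ)
    rcases hc.total hp hq with hle | hle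
    · refine ⟨q, hq, ?_, fun x hx => hle.2 (hp2 x hx)⟩
      intro x hx
      rcases Multiset.mem_cons.1 hx with rfl | hx
      · exact haq
      · exact hle.1 (hp1 x hx)
    · refine ⟨p, hp, ?_, hp2⟩
      intro x hx
      rcases Multiset.mem_cons.1 hx with rfl | hx
      · exact hle.1 haq
      · exact hp1 x hx

theorem World_ext {Ax : MAx} (Γ Δ : Multiset Fm) (h : ¬ GM Ax false Γ Δ) :
    ∃ w : World Ax, (∀ x ∈ Γ, x ∈ w.S) ∧ (∀ x ∈ Δ, x ∈ w.T) := by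
  have h0 : (({x | x ∈ Γ}, {x | x ∈ Δ}) : Set Fm × Set Fm) ∈
      {p : Set Fm × Set Fm | ¬ DerS Ax p.1 p.2} := by
    rintro ⟨Γ', Δ', h1, h2, h3⟩
    exact h (GM_struct h3 h1 h2)
  obtain ⟨m, hm, hmax⟩ := zorn_le_nonempty₀ _ (by
    intro c hcs hc y hy
    refine ⟨({x | ∃ p ∈ c, x ∈ p.1}, {x | ∃ p ∈ c, x ∈ p.2}), ?_, ?_⟩
    · rintro ⟨Γ', Δ', h1, h2, h3⟩
      obtain ⟨p, hp, hp1, hp2⟩ := chain_fin hc hy Γ' Δ' h1 h2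
      exact hcs hp ⟨Γ', Δ', hp1, hp2, h3⟩
    · intro z hz
      exact ⟨fun x hx => ⟨z, hz, hx⟩, fun x hx => ⟨z, hz, hx⟩⟩) _ h0
  refine ⟨⟨m.1, m.2, hmax.1, ?_, ?_⟩, fun x hx => hm.1 hx, fun x hx => hm.2 hx⟩
  · intro A hA
    by_contra hd
    have := hmax.2 (y := (insert A m.1, m.2)) hd ⟨Set.subset_insert _ _, le_refl _⟩
    exact hA (this.1 (Set.mem_insert _ _))
  · intro A hA
    by_contra hd
    have := hmax.2 (y := (m.1, insert A m.2)) hd ⟨le_refl _, Set.subset_insert _ _⟩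
    exact hA (this.2 (Set.mem_insert _ _))

/-- The finite sets of premises generating the neighbourhoods. -/
def Allowed (Ax : MAx) (S : Set Fm) (F : Multiset Fm) : Prop :=
  (Ax.c = false ∧ ((Ax.n = true ∧ F = 0) ∨
    ∃ B, Fm.box B ∈ S ∧ (F = {B} ∨ (Ax.four = true ∧ F = {Fm.box B})))) ∨
  (Ax.c = true ∧ ∃ Γ Sg : Multiset Fm, F = Γ.map Fm.box + Sg ∧
    (∀ x ∈ Γ, Fm.box x ∈ S) ∧ (∀ x ∈ Sg, Fm.box x ∈ S) ∧
    (Γ = 0 ∨ Ax.four = true) ∧ (Γ + Sg = 0 → Ax.n = true))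

theorem map_box_mem {S : Set Fm} {Γ : Multiset Fm} (h : ∀ x ∈ Γ, Fm.box x ∈ S) :
    ∀ x ∈ Γ.map Fm.box, x ∈ S := by
  intro x hx
  obtain ⟨y, hy, rfl⟩ := Multiset.mem_map.1 hx
  exact h y hy

theorem add_mem {S : Set Fm} {Γ Δ : Multiset Fm} (h : ∀ x ∈ Γ, x ∈ S)
    (h' : ∀ x ∈ Δ, x ∈ S) : ∀ x ∈ Γ + Δ, x ∈ S := by
  intro x hx
  rcases Multiset.mem_add.1 hx with hx | hx
  · exact h x hx
  · exact h' x hx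

theorem Allowed_R {Ax : MAx} {S : Set Fm} {F : Multiset Fm} {A : Fm}
    (h : Allowed Ax S F) (hd : GM Ax false F {A}) :
    ∃ Γ : Multiset Fm, (∀ x ∈ Γ, x ∈ S) ∧ GM Ax false Γ {Fm.box A} := by
  rcases h with ⟨hc, ⟨hn, rfl⟩ | ⟨B, hB, rfl | ⟨h4, rfl⟩⟩⟩ | ⟨hc, Γ, Sg, rfl, h1, h2, h3, h4⟩
  · exact ⟨0, by simp, GM.ruleN (Or.inl hn) hd⟩
  · exact ⟨{Fm.box B}, by simpa using hB, GM.ruleM hc hd⟩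
  · exact ⟨{Fm.box B}, by simpa using hB, GM.rule4 h4 hd⟩
  · by_cases h0 : Γ + Sg = 0
    · have hn := h4 h0
      obtain ⟨rfl, rfl⟩ := add_eq_zero.1 h0
      exact ⟨0, by simp, GM.ruleN (Or.inl hn) (by simpa using hd)⟩
    · refine ⟨Γ.map Fm.box + Sg.map Fm.box, add_mem (map_box_mem h1) (map_box_mem h2), ?_⟩
      rcases h3 with rfl | h3
      · simpa using GM.ruleC hc (by simpa using h0) (by simpa using hd)
      · exact GM.ruleC4 hc h3 h0 hd

theorem Allowed_P {Ax : MAx} {S : Set Fm} {F : Multiset Fm}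
    (hp : Ax.p = true ∨ Ax.d = true) 
    (h : Allowed Ax S F) (hd : GM Ax false F 0) :
    ∃ Γ : Multiset Fm, (∀ x ∈ Γ, x ∈ S) ∧ GM Ax false Γ 0 := by
  rcases h with ⟨hc, ⟨hn, rfl⟩ | ⟨B, hB, rfl | ⟨h4, rfl⟩⟩⟩ | ⟨hc, Γ, Sg, rfl, h1, h2, h3, h4⟩
  · exact ⟨0, by simp, hd⟩
  · refine ⟨{Fm.box B}, by simpa using hB, ?_⟩
    rcases hp with hp | hp
    · exact GM.ruleP hp hd
    · exact GM_struct (GM.ruleD (A := B) (B := B) hp (GM_struct hd (by simp) (by simp)))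
        (by simp) (by simp)
  · exact ⟨{Fm.box B}, by simpa using hB, hd⟩
  · refine ⟨Γ.map Fm.box + Sg.map Fm.box, add_mem (map_box_mem h1) (map_box_mem h2), ?_⟩
    rcases h3 with rfl | h3
    · simpa using GM.ruleCD hc hp (by simpa using hd)
    · exact GM.ruleCD4 hc h3 hp hd

theorem Allowed_add {Ax : MAx} {S : Set Fm} {F G : Multiset Fm} (hc : Ax.c = true)
    (h : Allowed Ax S F) (h' : Allowed Ax S G) : Allowed Ax S (F + G) := by
  rcases h with ⟨h, _⟩ | ⟨_, Γ, Sg, rfl, h1, h2, h3, h4⟩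
  · simp [hc] at h
  rcases h' with ⟨h', _⟩ | ⟨_, Γ', Sg', rfl, h1', h2', h3', h4'⟩
  · simp [hc] at h'
  refine Or.inr ⟨hc, Γ + Γ', Sg + Sg', ?_, ?_, ?_, ?_, ?_⟩
  · rw [Multiset.map_add]; abel
  · intro x hx
    exact (Multiset.mem_add.1 hx).elim (h1 x) (h1' x)
  · intro x hx
    exact (Multiset.mem_add.1 hx).elim (h2 x) (h2' x)
  · rcases h3 with rfl | h3
    · rcases h3' with rfl | h3'
      · simp
      · exact Or.inr h3'
    · exact Or.inr h3
  · intro h0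
    apply h4
    simp only [add_eq_zero] at h0 ⊢
    tauto

theorem Allowed_D {Ax : MAx} {S : Set Fm} {F G : Multiset Fm} (hD : Ax.d = true)
    (h : Allowed Ax S F) (h' : Allowed Ax S G) (hd : GM Ax false (F + G) 0) :
    ∃ Γ : Multiset Fm, (∀ x ∈ Γ, x ∈ S) ∧ GM Ax false Γ 0 := by
  cases hc : Ax.c with
  | true => exact Allowed_P (Or.inr hD) (Allowed_add hc h h') hd
  | false =>
    have hF := h
    have hG := h'
    rcases h with ⟨_, ⟨hn, rfl⟩ | ⟨B, hB, hF'⟩⟩ | ⟨h, _⟩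
    · exact Allowed_P (Or.inr hD) hG (by simpa using hd)
    · rcases h' with ⟨_, ⟨hn, rfl⟩ | ⟨C, hC, hG'⟩⟩ | ⟨h, _⟩
      · exact Allowed_P (Or.inr hD) hF (by simpa using hd)
      · refine ⟨{Fm.box B, Fm.box C}, by simp [hB, hC], ?_⟩
        rcases hF' with rfl | ⟨h4, rfl⟩
        · rcases hG' with rfl | ⟨h4, rfl⟩
          · exact GM.ruleD hD (GM_struct hd (by simp) (by simp))
          · exact GM.ruleD4 hc h4 (Or.inl hD) (GM_struct hd (by simp) (by simp))
        · rcases hG' with rfl | ⟨h4, rfl⟩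
          · exact GM_struct (GM.ruleD4 (A := C) (B := B) hc h4 (Or.inl hD)
              (GM_struct hd (by simp) (by simp))) (by simp) (by simp)
          · exact GM_struct hd (by simp) (by simp)
      · simp [hc] at h
    · simp [hc] at h

theorem Allowed_four {Ax : MAx} {S : Set Fm} {F : Multiset Fm} (h4 : Ax.four = true)
    (h : Allowed Ax S F) : ∃ F', Allowed Ax S F' ∧
      ∀ S' : Set Fm, (∀ x ∈ F', x ∈ S') → Allowed Ax S' F := by
  rcases h with ⟨hc, ⟨hn, rfl⟩ | ⟨B, hB, hF⟩⟩ | ⟨hc, Γ, Sg, rfl, h1, h2, h3, hn⟩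
  · exact ⟨0, Or.inl ⟨hc, Or.inl ⟨hn, rfl⟩⟩, fun S' _ => Or.inl ⟨hc, Or.inl ⟨hn, rfl⟩⟩⟩
  · refine ⟨{Fm.box B}, Or.inl ⟨hc, Or.inr ⟨B, hB, Or.inr ⟨h4, rfl⟩⟩⟩, fun S' h => ?_⟩
    exact Or.inl ⟨hc, Or.inr ⟨B, h _ (by simp), hF⟩⟩
  · refine ⟨(Γ + Sg).map Fm.box, Or.inr ⟨hc, Γ + Sg, 0, by simp, ?_, by simp, Or.inr h4,
      by simpa using hn⟩, fun S' h => Or.inr ⟨hc, Γ, Sg, rfl, ?_, ?_, h3, hn⟩⟩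
    · intro x hx
      exact (Multiset.mem_add.1 hx).elim (h1 x) (h2 x)
    · intro x hx
      exact h _ (Multiset.mem_map_of_mem _ (Multiset.mem_add.2 (Or.inl hx)))
    · intro x hx
      exact h _ (Multiset.mem_map_of_mem _ (Multiset.mem_add.2 (Or.inr hx)))

/-- Truth at a world. -/
def sat (Ax : MAx) : Fm → World Ax → Prop
  | .var n, w => Fm.var n ∈ w.S
  | .bot, _ => False
  | .top, _ => True
  | .neg A, w => ¬ sat Ax A w
  | .and A B, w => sat Ax A w ∧ sat Ax B w
  | .or A B, w => sat Ax A w ∨ sat Ax B w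
  | .imp A B, w => sat Ax A w → sat Ax B w
  | .box A, w => ∃ F, Allowed Ax w.S F ∧ ∀ v : World Ax, (∀ x ∈ F, x ∈ v.S) → sat Ax A v

theorem sat_evalP (Ax : MAx) (w : World Ax) (A : Fm) :
    evalP (fun B => sat Ax B w) A ↔ sat Ax A w := by
  induction A <;> simp_all [evalP, sat]

theorem World_not {Ax : MAx} (w : World Ax) {Γ Δ : Multiset Fm} (h1 : ∀ x ∈ Γ, x ∈ w.S)
    (h2 : ∀ x ∈ Δ, x ∈ w.T) : ¬ GM Ax false Γ Δ := fun h => w.cons ⟨Γ, Δ, h1, h2, h⟩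

theorem MThm_sat {Ax : MAx} (hT : Ax.t = false) (h5 : Ax.five = false) {A : Fm}
    (h : MThm Ax A) : ∀ w, sat Ax A w := by
  induction h with
  | taut h => exact fun w => (sat_evalP Ax w _).1 (h _)
  | mp _ _ ih1 ih2 => exact fun w => ih1 w (ih2 w)
  | cong _ _ ih1 ih2 =>
    rintro w ⟨F, hF, h⟩
    exact ⟨F, hF, fun v hv => ih1 v (h v hv)⟩
  | axM =>
    rintro w ⟨F, hF, h⟩
    exact ⟨⟨F, hF, fun v hv => (h v hv).1⟩, ⟨F, hF, fun v hv => (h v hv).2⟩⟩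
  | axC hc =>
    rintro w ⟨⟨F, hF, h⟩, ⟨G, hG, h'⟩⟩
    exact ⟨F + G, Allowed_add hc hF hG, fun v hv =>
      ⟨h v (fun x hx => hv x (Multiset.mem_add.2 (Or.inl hx))),
       h' v (fun x hx => hv x (Multiset.mem_add.2 (Or.inr hx)))⟩⟩
  | axN hn =>
    intro w
    refine ⟨0, ?_, fun _ _ => trivial⟩
    cases hc : Ax.c with
    | false => exact Or.inl ⟨hc, Or.inl ⟨hn, rfl⟩⟩
    | true => exact Or.inr ⟨hc, 0, 0, by simp, by simp, by simp, by simp, fun _ => hn⟩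
  | axP hp =>
    rintro w ⟨F, hF, h⟩
    by_cases hd : GM Ax false F 0
    · obtain ⟨Γ, hΓ, hd⟩ := Allowed_P (Or.inl hp) hF hd
      exact World_not w hΓ (by simp) hd
    · obtain ⟨v, hv, _⟩ := World_ext _ _ hd
      exact h v hv
  | axD hD =>
    rintro w ⟨⟨F, hF, h⟩, ⟨G, hG, h'⟩⟩
    by_cases hd : GM Ax false (F + G) 0
    · obtain ⟨Γ, hΓ, hd⟩ := Allowed_D hD hF hG hd
      exact World_not w hΓ (by simp) hd
    · obtain ⟨v, hv, _⟩ := World_ext _ _ hd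
      exact h' v (fun x hx => hv x (Multiset.mem_add.2 (Or.inr hx)))
        (h v (fun x hx => hv x (Multiset.mem_add.2 (Or.inl hx))))
  | axT h => simp [hT] at h
  | ax4 h4 =>
    rintro w ⟨F, hF, h⟩
    obtain ⟨F', hF', h'⟩ := Allowed_four h4 hF
    exact ⟨F', hF', fun v hv => ⟨F, h' v.S hv, h⟩⟩
  | ax5 h => simp [h5] at h

theorem World_L1 {Ax : MAx} (w : World Ax) {A : Fm}
    (h : ∀ Γ Δ : Multiset Fm, (∀ x ∈ Γ, x ∈ w.S) → (∀ x ∈ Δ, x ∈ w.T) →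
      ¬ GM Ax false (A ::ₘ Γ) Δ) : A ∈ w.S := by
  by_contra hA
  obtain ⟨Γ, Δ, h1, h2, h3⟩ := DerS_insL (w.maxL A hA)
  exact h Γ Δ h1 h2 h3

theorem World_R1 {Ax : MAx} (w : World Ax) {A : Fm}
    (h : ∀ Γ Δ : Multiset Fm, (∀ x ∈ Γ, x ∈ w.S) → (∀ x ∈ Δ, x ∈ w.T) →
      ¬ GM Ax false Γ (A ::ₘ Δ)) : A ∈ w.T := by
  by_contra hA
  obtain ⟨Γ, Δ, h1, h2, h3⟩ := DerS_insR (w.maxR A hA)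
  exact h Γ Δ h1 h2 h3

theorem cons_mem {S : Set Fm} {A : Fm} {Γ : Multiset Fm} (hA : A ∈ S)
    (h : ∀ x ∈ Γ, x ∈ S) : ∀ x ∈ A ::ₘ Γ, x ∈ S := by
  intro x hx
  rcases Multiset.mem_cons.1 hx with rfl | hx
  · exact hA
  · exact h x hx

theorem truth {Ax : MAx} (A : Fm) : ∀ w : World Ax,
    (A ∈ w.S → sat Ax A w) ∧ (A ∈ w.T → ¬ sat Ax A w) := by
  induction A with
  | var n =>
    refine fun w => ⟨fun h => h, fun h h' => ?_⟩
    exact World_not w (Γ := Fm.var n ::ₘ 0) (Δ := Fm.var n ::ₘ 0)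
      (cons_mem h' (by simp)) (cons_mem h (by simp)) GM.init
  | bot =>
    refine fun w => ⟨fun h => ?_, fun h h' => h'⟩
    exact World_not w (Γ := Fm.bot ::ₘ 0) (Δ := 0) (cons_mem h (by simp)) (by simp) GM.botL
  | top =>
    refine fun w => ⟨fun h => trivial, fun h _ => ?_⟩
    exact World_not w (Γ := 0) (Δ := Fm.top ::ₘ 0) (by simp) (cons_mem h (by simp)) GM.topR
  | neg A ih =>
    refine fun w => ⟨fun h => (ih w).2 ?_, fun h => not_not.2 ((ih w).1 ?_)⟩
    · exact World_R1 w fun Γ Δ h1 h2 h3 => World_not w (cons_mem h h1) h2 (GM.negL h3)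
    · exact World_L1 w fun Γ Δ h1 h2 h3 => World_not w h1 (cons_mem h h2) (GM.negR h3)
  | and A B ihA ihB =>
    refine fun w => ⟨fun h => ⟨(ihA w).1 ?_, (ihB w).1 ?_⟩, fun h h' => ?_⟩
    · exact World_L1 w fun Γ Δ h1 h2 h3 => World_not w (cons_mem h h1) h2
        (GM.andL (GM_struct h3 (by simp; tauto) (fun _ h => h)))
    · exact World_L1 w fun Γ Δ h1 h2 h3 => World_not w (cons_mem h h1) h2
        (GM.andL (GM_struct h3 (by simp; tauto) (fun _ h => h)))
    · by_cases hA : A ∈ w.T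
      · exact (ihA w).2 hA h'.1
      by_cases hB : B ∈ w.T
      · exact (ihB w).2 hB h'.2
      obtain ⟨Γ, Δ, h1, h2, h3⟩ := DerS_insR (w.maxR A hA)
      obtain ⟨Γ', Δ', h1', h2', h3'⟩ := DerS_insR (w.maxR B hB)
      exact World_not w (add_mem h1 h1') (cons_mem h (add_mem h2 h2'))
        (GM.andR (GM_struct h3 (by simp; tauto) (by simp; tauto))
          (GM_struct h3' (by simp; tauto) (by simp; tauto)))
  | or A B ihA ihB =>
    refine fun w => ⟨fun h => ?_, fun h => not_or.2 ⟨(ihA w).2 ?_, (ihB w).2 ?_⟩⟩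
    · by_cases hA : A ∈ w.S
      · exact Or.inl ((ihA w).1 hA)
      by_cases hB : B ∈ w.S
      · exact Or.inr ((ihB w).1 hB)
      obtain ⟨Γ, Δ, h1, h2, h3⟩ := DerS_insL (w.maxL A hA)
      obtain ⟨Γ', Δ', h1', h2', h3'⟩ := DerS_insL (w.maxL B hB)
      exact absurd (GM.orL (GM_struct h3 (by simp <;> tauto) (by simp <;> tauto))
          (GM_struct h3' (by simp <;> tauto) (by simp <;> tauto)))
        (World_not w (cons_mem h (add_mem h1 h1')) (add_mem h2 h2'))
    · exact World_R1 w fun Γ Δ h1 h2 h3 => World_not w h1 (cons_mem h h2)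
        (GM.orR (GM_struct h3 (fun _ h => h) (by simp <;> tauto)))
    · exact World_R1 w fun Γ Δ h1 h2 h3 => World_not w h1 (cons_mem h h2)
        (GM.orR (GM_struct h3 (fun _ h => h) (by simp <;> tauto)))
  | imp A B ihA ihB =>
    refine fun w => ⟨fun h h' => ?_, fun h h' => (ihB w).2 ?_ (h' ((ihA w).1 ?_))⟩
    · by_cases hA : A ∈ w.T
      · exact absurd h' ((ihA w).2 hA)
      by_cases hB : B ∈ w.S
      · exact (ihB w).1 hB
      obtain ⟨Γ, Δ, h1, h2, h3⟩ := DerS_insR (w.maxR A hA)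
      obtain ⟨Γ', Δ', h1', h2', h3'⟩ := DerS_insL (w.maxL B hB)
      exact absurd (GM.impL (GM_struct h3' (by simp <;> tauto) (by simp <;> tauto))
          (GM_struct h3 (by simp <;> tauto) (by simp <;> tauto)))
        (World_not w (cons_mem h (add_mem h1 h1')) (add_mem h2 h2'))
    · exact World_R1 w fun Γ Δ h1 h2 h3 => World_not w h1 (cons_mem h h2)
        (GM.impR (GM_struct h3 (by simp <;> tauto) (by simp <;> tauto)))
    · exact World_L1 w fun Γ Δ h1 h2 h3 => World_not w h1 (cons_mem h h2)
        (GM.impR (GM_struct h3 (by simp <;> tauto) (by simp <;> tauto)))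
  | box A ih =>
    refine fun w => ⟨fun h => ⟨{A}, ?_, fun v hv => (ih v).1 (hv A (by simp))⟩, ?_⟩
    · cases hc : Ax.c with
      | false => exact Or.inl ⟨hc, Or.inr ⟨A, h, Or.inl rfl⟩⟩
      | true => exact Or.inr ⟨hc, 0, {A}, by simp, by simp, by simpa using h, by simp, by simp⟩
    · rintro h ⟨F, hF, h'⟩
      by_cases hd : GM Ax false F {A}
      · obtain ⟨Γ, hΓ, hd⟩ := Allowed_R hF hd
        exact World_not w hΓ (by simpa using h) hd
      · obtain ⟨v, hv, hv'⟩ := World_ext _ _ hd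
        exact (ih v).2 (hv' A (by simp)) (h' v hv)

/-- The filter of valuations generated by the theorems. -/
def thmFilter (Ax : MAx) : Filter (Fm → Prop) where
  sets := {X | ∃ C, MThm Ax C ∧ ∀ v, evalP v C → v ∈ X}
  univ_sets := ⟨.top, .taut (fun _ => trivial), fun _ _ => trivial⟩
  sets_of_superset := by
    rintro X Y ⟨C, hC, h⟩ hXY
    exact ⟨C, hC, fun v hv => hXY (h v hv)⟩
  inter_sets := by
    rintro X Y ⟨C, hC, h⟩ ⟨D, hD, h'⟩
    refine ⟨.and C D, ?_, fun v hv => ⟨h v hv.1, h' v hv.2⟩⟩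
    exact .mp (.mp (.taut (A := .imp C (.imp D (.and C D))) fun v a b => ⟨a, b⟩) hC) hD

theorem thm_of_ev {Ax : MAx} {A : Fm} (h : ∀ᶠ v in thmFilter Ax, evalP v A) : MThm Ax A := by
  obtain ⟨C, hC, h⟩ := h
  exact .mp (.taut (A := .imp C A) h) hC

theorem ev_of_thm {Ax : MAx} {A : Fm} (h : MThm Ax A) : ∀ᶠ v in thmFilter Ax, evalP v A :=
  ⟨A, h, fun _ h => h⟩

theorem ev_mono {Ax : MAx} {A B : Fm} (h : ∀ᶠ v in thmFilter Ax, evalP v A → evalP v B) :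
    ∀ᶠ v in thmFilter Ax, v (.box A) → v (.box B) := by
  have h1 : MThm Ax (.imp A (.and A B)) := thm_of_ev (by
    filter_upwards [h] with v hv a using ⟨a, hv a⟩)
  have h2 : MThm Ax (.imp (.and A B) A) := .taut fun v a => a.1
  filter_upwards [ev_of_thm (.cong h1 h2), ev_of_thm (.axM (Ax := Ax) (A := A) (B := B))]
    with v a b c using (b (a c)).2

theorem ev_conj {Ax : MAx} (hc : Ax.c = true) (Γ : Multiset Fm) (h0 : Γ ≠ 0) :
    ∃ K, (∀ v, evalP v K ↔ ∀ A ∈ Γ, evalP v A) ∧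
      ∀ᶠ v in thmFilter Ax, (∀ A ∈ Γ, v (.box A)) → v (.box K) := by
  induction Γ using Multiset.induction_on with
  | empty => exact absurd rfl h0
  | cons a Γ ih =>
    by_cases hΓ : Γ = 0
    · subst hΓ
      exact ⟨a, by simp, by simp⟩
    · obtain ⟨K, hK, hK'⟩ := ih hΓ
      refine ⟨.and a K, fun v => by simp [evalP, hK], ?_⟩
      filter_upwards [hK', ev_of_thm (.axC (Ax := Ax) (A := a) (B := K) hc)] with v h1 h2 h3
      exact h2 ⟨h3 a (by simp), h1 fun A hA => h3 A (by simp [hA])⟩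

theorem ev_P {Ax : MAx} (hp : Ax.p = true ∨ Ax.d = true) {A : Fm}
    (h : ∀ᶠ v in thmFilter Ax, ¬ evalP v A) : ∀ᶠ v in thmFilter Ax, ¬ v (.box A) := by
  rcases hp with hp | hp
  · have := ev_mono (Ax := Ax) (A := A) (B := .bot) (by filter_upwards [h] with v a b using a b)
    filter_upwards [this, ev_of_thm (.axP (Ax := Ax) hp)] with v a b c using b (a c)
  · have := ev_mono (Ax := Ax) (A := A) (B := .neg A)
      (by filter_upwards [h] with v a b using absurd b a)
    filter_upwards [this, ev_of_thm (.axD (Ax := Ax) (A := A) hp)] with v a b c using b ⟨c, a c⟩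

theorem ev_D {Ax : MAx} (hd : Ax.d = true) {A B : Fm}
    (h : ∀ᶠ v in thmFilter Ax, evalP v A → evalP v B → False) :
    ∀ᶠ v in thmFilter Ax, v (.box A) → v (.box B) → False := by
  have := ev_mono (Ax := Ax) (A := B) (B := .neg A)
    (by filter_upwards [h] with v a b c using a c b)
  filter_upwards [this, ev_of_thm (.axD (Ax := Ax) (A := A) hd)] with v a b c d using b ⟨c, a d⟩

theorem ev_four {Ax : MAx} (h4 : Ax.four = true) (A : Fm) :
    ∀ᶠ v in thmFilter Ax, v (.box A) → v (.box (.box A)) := ev_of_thm (.ax4 h4)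

theorem ev_boxes {Ax : MAx} (h4 : Ax.four = true) (Γ : Multiset Fm) :
    ∀ᶠ v in thmFilter Ax, ∀ A ∈ Γ, v (.box A) → v (.box (.box A)) := by
  induction Γ using Multiset.induction_on with
  | empty => simp
  | cons a Γ ih =>
    filter_upwards [ih, ev_four h4 a] with v h1 h2
    simpa using ⟨h2, h1⟩

/-- Validity of a sequent modulo the theorems. -/
def SeqEv (Ax : MAx) (Γ Δ : Multiset Fm) : Prop :=
  ∀ᶠ v in thmFilter Ax, (∀ A ∈ Γ, evalP v A) → ∃ B ∈ Δ, evalP v B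

theorem SeqEv_C {Ax : MAx} (hc : Ax.c = true) {Γ : Multiset Fm} {A : Fm} (h0 : Γ ≠ 0)
    (h : SeqEv Ax Γ {A}) :
    ∀ᶠ v in thmFilter Ax, (∀ A ∈ Γ, v (.box A)) → v (.box A) := by
  obtain ⟨K, hK, hK'⟩ := ev_conj hc Γ h0
  have := ev_mono (Ax := Ax) (A := K) (B := A) (by
    filter_upwards [h] with v a b
    simpa using a ((hK v).1 b))
  filter_upwards [this, hK'] with v a b c using a (b c)

theorem SeqEv_CD {Ax : MAx} (hc : Ax.c = true) (hp : Ax.p = true ∨ Ax.d = true)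
    {Γ : Multiset Fm} (h : SeqEv Ax Γ 0) :
    ∀ᶠ v in thmFilter Ax, (∀ A ∈ Γ, v (.box A)) → False := by
  by_cases h0 : Γ = 0
  · subst h0
    filter_upwards [h] with v a b
    simpa using a (by simp)
  obtain ⟨K, hK, hK'⟩ := ev_conj hc Γ h0
  have := ev_P (Ax := Ax) (A := K) hp (by
    filter_upwards [h] with v a b
    simpa using a ((hK v).1 b))
  filter_upwards [this, hK'] with v a b c using a (b c)

theorem SeqEv_N {Ax : MAx} (hn : Ax.n = true) {A : Fm} (h : SeqEv Ax 0 {A}) :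
    SeqEv Ax 0 {Fm.box A} := by
  have := ev_mono (Ax := Ax) (A := .top) (B := A) (by
    filter_upwards [h] with v a _
    simpa using a)
  filter_upwards [this, ev_of_thm (.axN (Ax := Ax) hn)] with v a b
  simpa [evalP] using a b

theorem boxes_lift {v : Fm → Prop} {Γ Sg : Multiset Fm}
    (h4 : ∀ A ∈ Γ, v (.box A) → v (.box (.box A)))
    (h : ∀ A ∈ Γ.map Fm.box + Sg.map Fm.box, evalP v A) :
    ∀ A ∈ Γ.map Fm.box + Sg, v (.box A) := by
  intro A hA
  rcases Multiset.mem_add.1 hA with hA | hA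
  · obtain ⟨B, hB, rfl⟩ := Multiset.mem_map.1 hA
    exact h4 B hB (h (.box B) (Multiset.mem_add.2 (Or.inl (Multiset.mem_map_of_mem _ hB))))
  · exact h (.box A) (Multiset.mem_add.2 (Or.inr (Multiset.mem_map_of_mem _ hA)))

theorem SeqEv_C4 {Ax : MAx} (hc : Ax.c = true) (h4 : Ax.four = true) {Γ Sg : Multiset Fm}
    {B : Fm} (h0 : Γ + Sg ≠ 0) (h : SeqEv Ax (Γ.map Fm.box + Sg) {B}) :
    SeqEv Ax (Γ.map Fm.box + Sg.map Fm.box) {Fm.box B} := by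
  filter_upwards [SeqEv_C hc (by simpa using h0) h, ev_boxes h4 Γ] with v a b c
  simpa [evalP] using a (boxes_lift b c)

theorem GM_sound {Ax : MAx} (hT : Ax.t = false) (h5 : Ax.five = false) {Γ Δ : Multiset Fm}
    (h : GM Ax false Γ Δ) : SeqEv Ax Γ Δ := by
  induction h with
  | init => exact Filter.Eventually.of_forall fun v h => ⟨Fm.var _, Multiset.mem_cons_self _ _, h _ (Multiset.mem_cons_self _ _)⟩
  | botL => exact Filter.Eventually.of_forall fun v h => (h .bot (by simp)).elim
  | topR => exact Filter.Eventually.of_forall fun v h => ⟨.top, by simp, trivial⟩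
  | negL _ ih | negR _ ih | andL _ ih | orR _ ih | impR _ ih | wkL _ ih | wkR _ ih
  | conL _ ih | conR _ ih =>
    filter_upwards [ih] with v a
    simp [evalP] at a ⊢
    try tauto
  | andR _ _ ih ih' | orL _ _ ih ih' | impL _ _ ih ih' =>
    filter_upwards [ih, ih'] with v a b
    simp [evalP] at a b ⊢
    tauto
  | ruleM _ _ ih =>
    filter_upwards [ev_mono (by filter_upwards [ih] with v a; simpa using a)] with v a
    simpa [evalP] using a
  | ruleC hc h0 _ ih =>
    filter_upwards [SeqEv_C hc h0 ih] with v a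
    simpa [evalP] using a
  | ruleN hn _ ih => exact SeqEv_N (by simpa [h5] using hn) ih
  | ruleP hp _ ih =>
    filter_upwards [ev_P (Or.inl hp) (by filter_upwards [ih] with v a; simpa using a)] with v a
    simpa [evalP] using a
  | ruleD hd _ ih =>
    filter_upwards [ev_D hd (by filter_upwards [ih] with v a; simpa using a)] with v a
    simpa [evalP] using a
  | ruleT h => simp [hT] at h
  | @rule4 A B h4 _ ih =>
    filter_upwards [ev_mono (A := .box A) (B := B)
      (by filter_upwards [ih] with v a; simpa using a), ev_four h4 A] with v a b
    simpa [evalP] using fun c => a (b c)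
  | rule5 h => simp [h5] at h
  | @ruleD4 A B _ h4 hd _ ih =>
    have hd : Ax.d = true := by simpa [h5] using hd
    filter_upwards [ev_D (A := A) (B := .box B) hd
      (by filter_upwards [ih] with v a; simpa using a), ev_four h4 B] with v a b
    simpa [evalP] using fun c d => a c (b d)
  | ruleD5 _ h => simp [h5] at h
  | ruleCD hc hp _ ih =>
    filter_upwards [SeqEv_CD hc hp ih] with v a
    simpa [evalP] using a
  | ruleC4 hc h4 h0 _ ih => exact SeqEv_C4 hc h4 h0 ih
  | @ruleCD4 Γ Sg hc h4 hp _ ih =>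
    filter_upwards [SeqEv_CD hc hp ih, ev_boxes h4 Γ] with v a b c
    exact (a (boxes_lift b c)).elim
  | @ruleK4 Γ Sg A hc hn h4 _ ih =>
    by_cases h0 : Γ + Sg = 0
    · obtain ⟨rfl, rfl⟩ := add_eq_zero.1 h0
      exact SeqEv_N hn (by simpa using ih)
    · exact SeqEv_C4 hc h4 h0 ih
  | ruleK45 _ _ _ h => simp [h5] at h
  | ruleKD45 _ _ _ h => simp [h5] at h
  | mcut h => simp at h

/-- Soundness and completeness of the sequent calculus `G_M𝒜ConW` for the
monotone modal logic `M𝒜`, for every `𝒜 ⊆ {N, C, P, D, 4}`: `A ∈ M𝒜` iff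
`⇒ A` is derivable in `G_M𝒜ConW`. -/
theorem GM_sound_complete (Ax : MAx) (hT : Ax.t = false) (h5 : Ax.five = false)
    (A : Fm) : MThm Ax A ↔ GM Ax false 0 {A} := by
  constructor
  · intro h
    by_contra hd
    obtain ⟨w, _, hw⟩ := World_ext _ _ hd
    exact (truth A w).2 (hw A (by simp)) (MThm_sat hT h5 h w)
  · intro h
    apply thm_of_ev
    filter_upwards [GM_sound hT h5 h] with v a
    simpa using a
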